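/- Let S be a finitely generated reduced cancellative commutative monoid and n ∈ S with at least two factorizations. Then the catenary degree of n is at least the minimum of the catenary degrees of the Betti elements of S that divide n. -/

import Mathlib

/-- The set of factorizations of `n` in terms of the generators `gens`. -/
def ZsetM {S : Type*} [AddCancelCommMonoid S] {k : ℕ} (gens : Fin k → S) (n : S) :
    Set (Fin k → ℕ) :=
  {a | ∑ i, a i • gens i = n}

/-- The length of a factorization. -/
def flen {k : ℕ} (a : Fin k → ℕ) : ℕ := ∑ i, a i

/-- The distance between two factorizations:
`max (|a - gcd(a,b)|, |b - gcd(a,b)|)` (componentwise gcd = min). -/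
def fdist {k : ℕ} (a b : Fin k → ℕ) : ℕ :=
  max (∑ i, (a i - b i)) (∑ i, (b i - a i))

/-- There is an `N`-chain of factorizations within `Z` from `a` to `b`. -/
def IsNChain {k : ℕ} (Z : Set (Fin k → ℕ)) (N : ℕ) (a b : Fin k → ℕ) : Prop :=
  ∃ l : List (Fin k → ℕ), l.head? = some a ∧ l.getLast? = some b ∧
    (∀ x ∈ l, x ∈ Z) ∧ l.Chain' (fun x y => fdist x y ≤ N)

/-- The catenary degree of `n`: the least `N` such that any two factorizations
of `n` are connected by an `N`-chain. -/
noncomputable def catDegM {S : Type*} [AddCancelCommMonoid S] {k : ℕ}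
    (gens : Fin k → S) (n : S) : ℕ :=
  sInf {N | ∀ a ∈ ZsetM gens n, ∀ b ∈ ZsetM gens n, IsNChain (ZsetM gens n) N a b}

/-- `n` is a Betti element: the graph on `Z(n)` joining factorizations with
nonzero componentwise gcd is disconnected. -/
def IsBettiM {S : Type*} [AddCancelCommMonoid S] {k : ℕ} (gens : Fin k → S)
    (n : S) : Prop :=
  ∃ a ∈ ZsetM gens n, ∃ b ∈ ZsetM gens n,
    ¬ Relation.ReflTransGen
      (fun x y => x ∈ ZsetM gens n ∧ y ∈ ZsetM gens n ∧ ∃ i, min (x i) (y i) ≠ 0) a b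

/-!
Let `z` be a longest factorization of `n`, and let `y ≠ z` be a factorization at distance at most
`c(n)` from `z`. Then `z - gcd(z, y)` has length at most `c(n)`, and the element it represents has
a second factorization. Choose `x ≤ z - gcd(z, y)` minimal among the exponent vectors whose
element has more than one factorization: an edge from `x` to another factorization of its element
`m` would let one cancel a common factor, so `x` is isolated and `m` is a Betti element. As `x`
divides the longest factorization `z`, it is itself a longest factorization of `m`; hence
`c(m) ≤ |x| ≤ c(n)`.
-/

theorem exists_rel_ne_of_reflTransGen {α : Type*} {r : α → α → Prop} {a b : α}
    (h : Relation.ReflTransGen r a b) (hab : a ≠ b) : ∃ c, r a c ∧ c ≠ a := by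
  induction h using Relation.ReflTransGen.head_induction_on with
  | refl => exact absurd rfl hab
  | @head a c hac _ ih =>
    rcases eq_or_ne c a with rfl | hca
    · exact ih hab
    · exact ⟨c, hac, hca⟩

section ExponentVectors

variable {k : ℕ} {Z : Set (Fin k → ℕ)} {N : ℕ} {a b : Fin k → ℕ}

theorem flen_add (a b : Fin k → ℕ) : flen (a + b) = flen a + flen b :=
  Finset.sum_add_distrib

theorem flen_mono : Monotone (flen (k := k)) := fun _ _ hab =>
  Finset.sum_le_sum fun i _ => hab i

theorem flen_tsub_le_fdist (a b : Fin k → ℕ) : flen (a - b) ≤ fdist a b :=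
  le_max_left _ _

theorem fdist_le_max_flen (a b : Fin k → ℕ) : fdist a b ≤ max (flen a) (flen b) :=
  max_le_max (flen_mono (tsub_le_self (a := a) (b := b)))
    (flen_mono (tsub_le_self (a := b) (b := a)))

theorem isNChain_of_fdist_le (ha : a ∈ Z) (hb : b ∈ Z) (h : fdist a b ≤ N) :
    IsNChain Z N a b :=
  ⟨[a, b], rfl, rfl, by simp [ha, hb], List.isChain_pair.2 h⟩

theorem IsNChain.reflTransGen (h : IsNChain Z N a b) :
    Relation.ReflTransGen (fun x y => y ∈ Z ∧ fdist x y ≤ N) a b := by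
  obtain ⟨l, hhead, hlast, hmem, hchain⟩ := h
  cases l with
  | nil => simp at hhead
  | cons x l =>
    obtain rfl : x = a := by simpa only [List.head?_cons, Option.some.injEq] using hhead
    refine List.relationReflTransGen_of_exists_isChain_cons l
      (hchain.imp_of_mem_imp fun _ y _ hy hxy => ⟨hmem y hy, hxy⟩) ?_
    simpa only [List.getLast?_eq_some_getLast (List.cons_ne_nil x l), Option.some.injEq]
      using hlast

end ExponentVectors

section Factorizations

variable {S : Type*} [AddCancelCommMonoid S] {k : ℕ} {gens : Fin k → S} {m n : S}
  {a b x : Fin k → ℕ}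

theorem add_mem_ZsetM_add_iff (hb : b ∈ ZsetM gens n) :
    a + b ∈ ZsetM gens (m + n) ↔ a ∈ ZsetM gens m := by
  obtain rfl : ∑ i, b i • gens i = n := hb
  simp [ZsetM, add_smul, Finset.sum_add_distrib]

theorem eq_zero_of_mem_ZsetM_zero
    (hatom : ∀ i, ∀ a : Fin k → ℕ, ∑ j, a j • gens j = gens i → a = Pi.single i 1)
    (ha : a ∈ ZsetM gens 0) : a = 0 := by
  ext i
  have hi : a + Pi.single i 1 ∈ ZsetM gens (0 + gens i) :=
    (add_mem_ZsetM_add_iff (by simp [ZsetM, Pi.single_apply])).2 ha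
  rw [zero_add] at hi
  exact congrFun (add_eq_right.1 (hatom i _ hi)) i

theorem finite_ZsetM (hzero : ∀ a ∈ ZsetM gens 0, a = 0) (n : S) : (ZsetM gens n).Finite := by
  refine WellQuasiOrderedLE.finite_of_isAntichain fun a ha b hb hne hab => hne ?_
  have hba : b - a ∈ ZsetM gens 0 := by
    rwa [← add_mem_ZsetM_add_iff ha, tsub_add_cancel_of_le hab, zero_add]
  exact hab.antisymm (tsub_eq_zero_iff_le.1 (hzero _ hba))

theorem add_sum_tsub_smul (hx : x ∈ ZsetM gens m) (ha : a ∈ ZsetM gens n) (hxa : x ≤ a) :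
    m + ∑ i, (a - x) i • gens i = n := by
  have hmem : a - x + x ∈ ZsetM gens (∑ i, (a - x) i • gens i + m) :=
    (add_mem_ZsetM_add_iff hx).2 rfl
  rw [tsub_add_cancel_of_le hxa, add_comm] at hmem
  exact hmem.symm.trans ha

theorem tsub_mem_ZsetM_swap (ha : a ∈ ZsetM gens n) (hb : b ∈ ZsetM gens n)
    (hab : a - b ∈ ZsetM gens m) : b - a ∈ ZsetM gens m := by
  have hgcd : a ⊓ b ∈ ZsetM gens (∑ i, (a ⊓ b) i • gens i) := rfl
  have ha' : a - b + a ⊓ b = a := funext fun _ => tsub_add_min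
  have hb' : b - a + a ⊓ b = b := inf_comm b a ▸ funext fun _ => tsub_add_min
  have hmem := (add_mem_ZsetM_add_iff hgcd).2 hab
  rw [ha'] at hmem
  rwa [← add_mem_ZsetM_add_iff hgcd, hb', hmem.symm.trans ha]

theorem nontrivial_ZsetM_of_tsub_mem (ha : a ∈ ZsetM gens n) (hb : b ∈ ZsetM gens n)
    (hne : a ≠ b) (hab : a - b ∈ ZsetM gens m) : (ZsetM gens m).Nontrivial := by
  refine ⟨a - b, hab, b - a, tsub_mem_ZsetM_swap ha hb hab, fun h => hne ?_⟩
  ext i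
  have hi : a i - b i = b i - a i := congrFun h i
  omega

theorem isBettiM_of_minimal
    (hx : Minimal (fun y => (ZsetM gens (∑ i, y i • gens i)).Nontrivial) x) :
    IsBettiM gens (∑ i, x i • gens i) := by
  have hxmem : x ∈ ZsetM gens (∑ i, x i • gens i) := rfl
  obtain ⟨y, hy, hyx⟩ := hx.prop.exists_ne x
  refine ⟨x, hxmem, y, hy, fun hconn => ?_⟩
  obtain ⟨z, ⟨_, hz, i, hi⟩, hzx⟩ := exists_rel_ne_of_reflTransGen hconn hyx.symm
  have hlt : x - z < x := by
    have hlti : x i - z i < x i := by omega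
    exact Pi.lt_def.2 ⟨tsub_le_self, i, hlti⟩
  exact hx.not_prop_of_lt hlt (nontrivial_ZsetM_of_tsub_mem hxmem hz hzx.symm rfl)

theorem exists_le_isBettiM (hn : (ZsetM gens n).Nontrivial) (ha : a ∈ ZsetM gens n) :
    ∃ x ≤ a, ∃ m, x ∈ ZsetM gens m ∧ IsBettiM gens m := by
  obtain rfl : ∑ i, a i • gens i = n := ha
  obtain ⟨x, hxa, hx⟩ := exists_minimal_le_of_wellFoundedLT
    (fun y => (ZsetM gens (∑ i, y i • gens i)).Nontrivial) a hn
  exact ⟨x, hxa, _, rfl, isBettiM_of_minimal hx⟩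

theorem isMaxOn_flen_of_le (ha : a ∈ ZsetM gens n) (hmax : IsMaxOn flen (ZsetM gens n) a)
    (hx : x ∈ ZsetM gens m) (hxa : x ≤ a) : IsMaxOn flen (ZsetM gens m) x := by
  intro f hf
  have hmem : f + (a - x) ∈ ZsetM gens n := by
    rw [← add_sum_tsub_smul hx ha hxa]
    exact (add_mem_ZsetM_add_iff rfl).2 hf
  have hlen : flen (f + (a - x)) ≤ flen (x + (a - x)) := by
    rw [add_tsub_cancel_of_le hxa]
    exact hmax hmem
  rw [flen_add, flen_add] at hlen
  exact Nat.le_of_add_le_add_right hlen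

theorem isNChain_flen_of_isMaxOn (hx : IsMaxOn flen (ZsetM gens n) x)
    (ha : a ∈ ZsetM gens n) (hb : b ∈ ZsetM gens n) :
    IsNChain (ZsetM gens n) (flen x) a b :=
  isNChain_of_fdist_le ha hb ((fdist_le_max_flen a b).trans (max_le (hx ha) (hx hb)))

theorem catDegM_le_flen_of_isMaxOn (hx : IsMaxOn flen (ZsetM gens n) x) :
    catDegM gens n ≤ flen x :=
  Nat.sInf_le fun _ ha _ hb => isNChain_flen_of_isMaxOn hx ha hb

theorem isNChain_catDegM_of_isMaxOn (hx : IsMaxOn flen (ZsetM gens n) x)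
    (ha : a ∈ ZsetM gens n) (hb : b ∈ ZsetM gens n) :
    IsNChain (ZsetM gens n) (catDegM gens n) a b :=
  Nat.sInf_mem (s := {N | ∀ a ∈ ZsetM gens n, ∀ b ∈ ZsetM gens n, IsNChain (ZsetM gens n) N a b})
    ⟨flen x, fun _ ha _ hb => isNChain_flen_of_isMaxOn hx ha hb⟩ a ha b hb

theorem min_betti_le_catDeg_general (hfin : (ZsetM gens n).Finite)
    (hn : (ZsetM gens n).Nontrivial) :
    ∃ m : S, IsBettiM gens m ∧ (∃ t : S, n = m + t) ∧ catDegM gens m ≤ catDegM gens n := by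
  obtain ⟨z, hz, hmax⟩ := Set.exists_max_image _ flen hfin hn.nonempty
  obtain ⟨w, hw, hwz⟩ := hn.exists_ne z
  obtain ⟨y, ⟨hy, hdist⟩, hyz⟩ := exists_rel_ne_of_reflTransGen
    (isNChain_catDegM_of_isMaxOn hmax hz hw).reflTransGen hwz.symm
  obtain ⟨x, hxzy, m, hx, hm⟩ :=
    exists_le_isBettiM (nontrivial_ZsetM_of_tsub_mem hz hy hyz.symm rfl) rfl
  have hxz : x ≤ z := hxzy.trans tsub_le_self
  refine ⟨m, hm, ⟨_, (add_sum_tsub_smul hx hz hxz).symm⟩, ?_⟩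
  calc catDegM gens m
    _ ≤ flen x := catDegM_le_flen_of_isMaxOn (isMaxOn_flen_of_le hz hmax hx hxz)
    _ ≤ flen (z - y) := flen_mono hxzy
    _ ≤ fdist z y := flen_tsub_le_fdist z y
    _ ≤ catDegM gens n := hdist

end Factorizations

/-- The catenary degree of an element n with at least two factorizations is at
least the minimum of the catenary degrees of the Betti elements dividing n. -/
theorem min_betti_le_catDeg {S : Type*} [AddCancelCommMonoid S] {k : ℕ}
    (gens : Fin k → S)
    (hred : ∀ a b : S, a + b = 0 → a = 0)
    (hgen : ∀ s : S, ∃ a : Fin k → ℕ, ∑ i, a i • gens i = s)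
    (hatom : ∀ i, ∀ a : Fin k → ℕ, ∑ j, a j • gens j = gens i → a = Pi.single i 1)
    (n : S) (hn : ∃ a ∈ ZsetM gens n, ∃ b ∈ ZsetM gens n, a ≠ b) :
    sInf {c | ∃ m : S, IsBettiM gens m ∧ (∃ t : S, n = m + t) ∧ catDegM gens m = c}
      ≤ catDegM gens n := by
  obtain ⟨m, hm, hdvd, hle⟩ := min_betti_le_catDeg_general
    (finite_ZsetM (fun _ ha => eq_zero_of_mem_ZsetM_zero hatom ha) n) hn
  exact le_trans (Nat.sInf_le ⟨m, hm, hdvd, rfl⟩) hle
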